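/- Let n ≥ 3, 0 ≤ δ < 1/2, α ∈ ℝ, and set α_δ = (n−2)δ/(1−2δ) and p = n + 2α_δ. Let Ω ⊆ ℝⁿ be open, let u : Ω → ℝ be continuously differentiable with locally Lipschitz gradient ∇u, and let S : Ω → (symmetric n×n real matrices) be a matrix-valued function. Suppose x ∈ Ω is a point at which ∇u is differentiable, with derivative matrix H, and that the following matrix condition holds at x: for every v ∈ ℝⁿ, (n−2)⟨Hv, v⟩ + (1−2δ)(tr H)|v|² + (n−2)⟨∇u(x), v⟩² − (n−2)(1−δ)|∇u(x)|²|v|² + ⟨S(x)v, v⟩ ≥ 0. Then the vector field X = |∇u|^{p−2} e^{αu} ∇u is differentiable at x, and its divergence satisfies div X(x) ≥ (α − α_δ)|∇u(x)|^{p} e^{αu(x)} − (1/(1−2δ))‖S(x)‖·|∇u(x)|^{p−2} e^{αu(x)}, where ‖S(x)‖ denotes the operator norm of the matrix S(x). -/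

import Mathlib

open RealInnerProductSpace

/-!
By the Leibniz rule, with `q = p - 2 > 0` and `v = ∇u(x)`,
`div X = e^{αu} (|v|^q Δu + q |v|^{q-2} ⟨Hv, v⟩ + α |v|^{q+2})`.
Since `q = (n-2)/(1-2δ)`, the first two terms are `|v|^{q-2} / (1-2δ)` times the part of the matrix
condition involving `H`, tested on `v` itself; the remaining terms of the condition contribute
`-α_δ |v|^{q+2}` and the error in `S`. Critical points of `u` need no separate treatment once
`v ↦ |v|^q v` is known to be differentiable at `0`.
-/

section Divergence

variable {E : Type*} [NormedAddCommGroup E] [NormedSpace ℝ E]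

/-- The vector field `X` is differentiable at `x` with divergence `d`, the divergence being the
trace of the derivative. It is meaningful for finite-dimensional `E` only: otherwise
`LinearMap.trace` may take the junk value `0`. -/
def HasDivergenceAt (X : E → E) (d : ℝ) (x : E) : Prop :=
  ∃ X' : E →L[ℝ] E, HasFDerivAt X X' x ∧ LinearMap.trace ℝ E X'.toLinearMap = d

theorem trace_smul_add_smulRight [FiniteDimensional ℝ E] (c : ℝ) (A : E →L[ℝ] E) (φ : E →L[ℝ] ℝ)
    (v : E) :
    LinearMap.trace ℝ E (c • A + φ.smulRight v).toLinearMap =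
      c * LinearMap.trace ℝ E A.toLinearMap + φ v := by
  change LinearMap.trace ℝ E (c • A.toLinearMap + φ.toLinearMap.smulRight v) = _
  rw [map_add, map_smul, LinearMap.trace_smulRight, smul_eq_mul, ContinuousLinearMap.coe_coe]

theorem HasDivergenceAt.smul [FiniteDimensional ℝ E] {ρ : E → ℝ} {ρ' : E →L[ℝ] ℝ} {X : E → E}
    {d : ℝ} {x : E} (hX : HasDivergenceAt X d x) (hρ : HasFDerivAt ρ ρ' x) :
    HasDivergenceAt (fun y => ρ y • X y) (ρ x * d + ρ' (X x)) x := by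
  obtain ⟨X', hX', rfl⟩ := hX
  exact ⟨_, hρ.smul hX', trace_smul_add_smulRight _ _ _ _⟩

theorem hasFDerivAt_smul_self_zero {ρ : E → ℝ} (hρ : Filter.Tendsto ρ (nhds 0) (nhds 0)) :
    HasFDerivAt (fun v => ρ v • v) (0 : E →L[ℝ] E) 0 := by
  refine .of_isLittleO ?_
  simpa using ((Asymptotics.isLittleO_one_iff ℝ).2 hρ).smul_isBigO
    (Asymptotics.isBigO_refl (id : E → E) (nhds 0))

end Divergence

section NormPower

theorem rpow_mul_sq {r q : ℝ} (hr : 0 ≤ r) (hq : q + 2 ≠ 0) : r ^ q * r ^ 2 = r ^ (q + 2) :=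
  (Real.rpow_add_natCast' hr hq).symm

variable {E : Type*} [NormedAddCommGroup E] [InnerProductSpace ℝ E]

theorem hasFDerivAt_norm_rpow_of_ne_zero {v : E} (hv : v ≠ 0) (q : ℝ) :
    HasFDerivAt (fun w : E => ‖w‖ ^ q) ((q * ‖v‖ ^ (q - 2)) • innerSL ℝ v) v := by
  have hsq_rpow (w : E) (s : ℝ) : (‖w‖ ^ 2) ^ s = ‖w‖ ^ (2 * s) := by
    rw [← Real.rpow_natCast_mul (norm_nonneg w), Nat.cast_ofNat]
  have hderiv := (hasStrictFDerivAt_norm_sq v).hasFDerivAt.rpow_const (p := q / 2)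
    (.inl (by simpa using hv))
  simp only [hsq_rpow, mul_sub, mul_div_cancel₀ q (two_ne_zero' ℝ), mul_one] at hderiv
  convert hderiv using 1
  module

theorem hasFDerivAt_norm_rpow_smul_self {q : ℝ} (hq : 0 < q) (v : E) :
    HasFDerivAt (fun w : E => ‖w‖ ^ q • w)
      (‖v‖ ^ q • ContinuousLinearMap.id ℝ E +
        ((q * ‖v‖ ^ (q - 2)) • innerSL ℝ v).smulRight v) v := by
  rcases eq_or_ne v 0 with rfl | hv
  · have hlim : Filter.Tendsto (fun w : E => ‖w‖ ^ q) (nhds 0) (nhds 0) := by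
      simpa [hq.ne'] using (continuous_norm.rpow_const fun _ => .inr hq.le).tendsto (0 : E)
    simpa [hq.ne'] using hasFDerivAt_smul_self_zero hlim
  · exact (hasFDerivAt_norm_rpow_of_ne_zero hv q).smul (hasFDerivAt_id v)

theorem hasDivergenceAt_norm_rpow_smul [FiniteDimensional ℝ E] {q : ℝ} (hq : 0 < q)
    {G : E → E} {H : E →L[ℝ] E} {x : E} (hG : HasFDerivAt G H x) :
    HasDivergenceAt (fun y => ‖G y‖ ^ q • G y)
      (‖G x‖ ^ q * LinearMap.trace ℝ E H.toLinearMap +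
        q * ‖G x‖ ^ (q - 2) * ⟪H (G x), G x⟫) x := by
  refine ⟨_, (hasFDerivAt_norm_rpow_smul_self hq (G x)).comp x hG, ?_⟩
  rw [real_inner_comm]
  exact trace_smul_add_smulRight (‖G x‖ ^ q) H
    (((q * ‖G x‖ ^ (q - 2)) • innerSL ℝ (G x)).comp H) (G x)

theorem hasDivergenceAt_norm_rpow_mul_exp_smul_gradient [FiniteDimensional ℝ E] {q : ℝ}
    (hq : 0 < q) (α : ℝ) {u : E → ℝ} {G : E → E} {H : E →L[ℝ] E} {x : E}
    (hu : HasFDerivAt u (innerSL ℝ (G x)) x) (hG : HasFDerivAt G H x) :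
    HasDivergenceAt (fun y => (‖G y‖ ^ q * Real.exp (α * u y)) • G y)
      (Real.exp (α * u x) * (‖G x‖ ^ q * LinearMap.trace ℝ E H.toLinearMap +
        q * ‖G x‖ ^ (q - 2) * ⟪H (G x), G x⟫ + α * ‖G x‖ ^ (q + 2))) x := by
  have hdiv := (hasDivergenceAt_norm_rpow_smul hq hG).smul (hu.const_mul α).exp
  have hpow := rpow_mul_sq (norm_nonneg (G x)) (by positivity : q + 2 ≠ 0)
  convert hdiv using 1
  · funext y
    rw [smul_smul, mul_comm]
  · simp only [smul_apply, innerSL_apply_apply, real_inner_smul_right,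
      real_inner_self_eq_norm_sq, smul_eq_mul, ← hpow]
    ring

end NormPower

section ConformalRicciForm

variable {E : Type*} [NormedAddCommGroup E] [InnerProductSpace ℝ E]

theorem real_inner_map_self_le (S : E →L[ℝ] E) (v : E) : ⟪S v, v⟫ ≤ ‖S‖ * ‖v‖ ^ 2 :=
  calc ⟪S v, v⟫ ≤ ‖S v‖ * ‖v‖ := real_inner_le_norm _ _
    _ ≤ ‖S‖ * ‖v‖ * ‖v‖ := by gcongr; exact S.le_opNorm v
    _ = ‖S‖ * ‖v‖ ^ 2 := by ring

/-- The quadratic form of the tensor `S_u` at a point where `u` has gradient `g` and Hessian `H`,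
in dimension `d`. It represents `Ric(g_u) - 2δσ₁(A_u)g_u` for the conformal metric
`g_u = e^{-2u}g`, and its nonnegativity is the matrix condition. The dimension enters only as a
real parameter, so it need not be that of `E`. -/
noncomputable def conformalRicciForm (d δ : ℝ) (g : E) (H S : E →L[ℝ] E) (v : E) : ℝ :=
  (d - 2) * ⟪H v, v⟫
    + (1 - 2 * δ) * LinearMap.trace ℝ E H.toLinearMap * ‖v‖ ^ 2
    + (d - 2) * ⟪g, v⟫ ^ 2
    - (d - 2) * (1 - δ) * ‖g‖ ^ 2 * ‖v‖ ^ 2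
    + ⟪S v, v⟫

theorem conformalRicciForm_self_le (d δ : ℝ) (H S : E →L[ℝ] E) (v : E) :
    conformalRicciForm d δ v H S v ≤
      (d - 2) * ⟪H v, v⟫ + (1 - 2 * δ) * LinearMap.trace ℝ E H.toLinearMap * ‖v‖ ^ 2
        + (d - 2) * δ * ‖v‖ ^ 4 + ‖S‖ * ‖v‖ ^ 2 := by
  have hS := real_inner_map_self_le S v
  rw [conformalRicciForm, real_inner_self_eq_norm_sq]
  linarith

theorem nonneg_norm_rpow_of_conformalRicciForm_self_nonneg {d δ q : ℝ} (hδ : δ < 1 / 2)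
    (hq : q = (d - 2) / (1 - 2 * δ)) (hq0 : 0 < q) {H S : E →L[ℝ] E} {v : E}
    (hform : 0 ≤ conformalRicciForm d δ v H S v) :
    0 ≤ q * ‖v‖ ^ (q - 2) * ⟪H v, v⟫ + ‖v‖ ^ q * LinearMap.trace ℝ E H.toLinearMap
      + (d - 2) * δ / (1 - 2 * δ) * ‖v‖ ^ (q + 2) + 1 / (1 - 2 * δ) * ‖S‖ * ‖v‖ ^ q := by
  have hδ' : 0 < 1 - 2 * δ := by linarith
  have hpow : ‖v‖ ^ (q - 2) * ‖v‖ ^ 2 = ‖v‖ ^ q := by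
    simpa using rpow_mul_sq (q := q - 2) (norm_nonneg v) (by simpa using hq0.ne')
  have hpow_add : ‖v‖ ^ q * ‖v‖ ^ 2 = ‖v‖ ^ (q + 2) :=
    rpow_mul_sq (norm_nonneg v) (by positivity)
  have hweight : 0 ≤ ‖v‖ ^ (q - 2) / (1 - 2 * δ) := by positivity
  calc 0 ≤ ‖v‖ ^ (q - 2) / (1 - 2 * δ) *
        ((d - 2) * ⟪H v, v⟫ + (1 - 2 * δ) * LinearMap.trace ℝ E H.toLinearMap * ‖v‖ ^ 2
          + (d - 2) * δ * ‖v‖ ^ 4 + ‖S‖ * ‖v‖ ^ 2) :=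
        mul_nonneg hweight (hform.trans (conformalRicciForm_self_le d δ H S v))
    _ = _ := by
        rw [← hpow_add, ← hpow]
        nth_rw 2 [hq]
        field_simp

end ConformalRicciForm

theorem stmt_5_general {E : Type*} [NormedAddCommGroup E] [InnerProductSpace ℝ E]
    [FiniteDimensional ℝ E] {d δ α αd p : ℝ} (hd : 2 < d) (hδ : δ < 1 / 2)
    (hαd : αd = (d - 2) * δ / (1 - 2 * δ)) (hp : p = d + 2 * αd)
    {u : E → ℝ} {G : E → E} {x : E} {H S : E →L[ℝ] E}
    (hu : HasFDerivAt u (innerSL ℝ (G x)) x) (hG : HasFDerivAt G H x)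
    (hform : 0 ≤ conformalRicciForm d δ (G x) H S (G x)) :
    ∃ X' : E →L[ℝ] E,
      HasFDerivAt (fun y => (‖G y‖ ^ (p - 2) * Real.exp (α * u y)) • G y) X' x ∧
      (α - αd) * ‖G x‖ ^ p * Real.exp (α * u x)
          - 1 / (1 - 2 * δ) * ‖S‖ * (‖G x‖ ^ (p - 2) * Real.exp (α * u x))
        ≤ LinearMap.trace ℝ E X'.toLinearMap := by
  have hδ' : 0 < 1 - 2 * δ := by linarith
  have hq : p - 2 = (d - 2) / (1 - 2 * δ) := by
    rw [hp, hαd]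
    field_simp
    ring
  have hq0 : 0 < p - 2 := hq ▸ div_pos (by linarith) hδ'
  obtain ⟨X', hX', htrace⟩ := hasDivergenceAt_norm_rpow_mul_exp_smul_gradient hq0 α hu hG
  have hcondition := mul_nonneg (Real.exp_nonneg (α * u x))
    (nonneg_norm_rpow_of_conformalRicciForm_self_nonneg hδ hq hq0 hform)
  rw [sub_add_cancel] at htrace
  rw [sub_add_cancel, ← hαd] at hcondition
  exact ⟨X', hX', by linarith⟩

theorem stmt_5 (n : ℕ) (hn : 3 ≤ n) (δ α : ℝ) (hδ0 : 0 ≤ δ) (hδ : δ < 1/2)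
    (αd p : ℝ) (hαd : αd = ((n : ℝ) - 2) * δ / (1 - 2*δ)) (hp : p = n + 2*αd)
    (Ω : Set (EuclideanSpace ℝ (Fin n))) (hΩ : IsOpen Ω)
    (u : EuclideanSpace ℝ (Fin n) → ℝ)
    (G : EuclideanSpace ℝ (Fin n) → EuclideanSpace ℝ (Fin n))
    (hu : ∀ y ∈ Ω, HasGradientAt u (G y) y)
    (hG : ∀ y ∈ Ω, ∃ s ∈ nhds y, ∃ K, LipschitzOnWith K G s)
    (S : EuclideanSpace ℝ (Fin n) → EuclideanSpace ℝ (Fin n) →L[ℝ] EuclideanSpace ℝ (Fin n))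
    (hS : ∀ y ∈ Ω, ∀ v w, ⟪S y v, w⟫ = ⟪v, S y w⟫)
    (x : EuclideanSpace ℝ (Fin n)) (hx : x ∈ Ω)
    (H : EuclideanSpace ℝ (Fin n) →L[ℝ] EuclideanSpace ℝ (Fin n))
    (hH : HasFDerivAt G H x)
    (hmat : ∀ v, 0 ≤ ((n : ℝ) - 2) * ⟪H v, v⟫
        + (1 - 2*δ) * (LinearMap.trace ℝ _ H.toLinearMap) * ‖v‖^2
        + ((n : ℝ) - 2) * ⟪G x, v⟫^2
        - ((n : ℝ) - 2) * (1 - δ) * ‖G x‖^2 * ‖v‖^2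
        + ⟪S x v, v⟫) :
    ∃ X' : EuclideanSpace ℝ (Fin n) →L[ℝ] EuclideanSpace ℝ (Fin n),
      HasFDerivAt (fun y => (‖G y‖ ^ (p - 2) * Real.exp (α * u y)) • G y) X' x ∧
      (α - αd) * ‖G x‖ ^ p * Real.exp (α * u x)
          - (1/(1 - 2*δ)) * ‖S x‖ * (‖G x‖ ^ (p - 2) * Real.exp (α * u x))
        ≤ LinearMap.trace ℝ _ X'.toLinearMap := by
  exact stmt_5_general (by exact_mod_cast hn) hδ hαd hp (hu x hx).hasFDerivAt hH (hmat (G x))
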